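/- Let G be a finite undirected unweighted simple graph and let B₁ be a finite collection of pairs (c, d) with c a vertex and d a nonnegative integer. Call a vertex v covered if v ∈ ball_G(c, d) for some (c, d) ∈ B₁, and covered at boundary if v ∈ ball_G^=(c, d) for every (c, d) ∈ B₁ with v ∈ ball_G(c, d). Let π be a shortest path in G from s to t, and let π[u, v] be a maximal subpath of π all of whose vertices are covered, with u ≠ s and v ≠ t. Then both u and v are covered at boundary. -/

import Mathlib

/-- The ball of radius `r` around `c` in the graph `G`. -/
def gball {V : Type} (G : SimpleGraph V) (c : V) (r : ℕ) : Set V :=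
  {v | G.edist c v ≤ (r : ℕ∞)}

/-- The boundary (sphere) of radius `r` around `c` in the graph `G`. -/
def gsphere {V : Type} (G : SimpleGraph V) (c : V) (r : ℕ) : Set V :=
  {v | G.edist c v = (r : ℕ∞)}

/-- A vertex is covered by the collection `B₁` of balls if it lies in one of
them. -/
def Covered {V : Type} (G : SimpleGraph V) (B₁ : Finset (V × ℕ)) (v : V) : Prop :=
  ∃ p ∈ B₁, v ∈ gball G p.1 p.2

/-- A vertex is covered at boundary by `B₁` if it lies on the boundary of
every ball of `B₁` containing it. -/
def CoveredAtBoundary {V : Type} (G : SimpleGraph V) (B₁ : Finset (V × ℕ))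
    (v : V) : Prop :=
  ∀ p ∈ B₁, v ∈ gball G p.1 p.2 → v ∈ gsphere G p.1 p.2

/-!
Radii are integers, so a ball containing a vertex off its boundary contains all neighbours of that
vertex. Hence a vertex with an uncovered neighbour is covered at boundary, and maximality makes the
vertices just beyond the two ends of the subpath uncovered.
-/

section

variable {V : Type} {G : SimpleGraph V}

theorem mem_gball_of_edist_lt_of_adj {c x y : V} {r : ℕ} (hx : G.edist c x < r)
    (hxy : G.Adj x y) : y ∈ gball G c r :=
  calc G.edist c y ≤ G.edist c x + G.edist x y := SimpleGraph.edist_triangle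
    _ = G.edist c x + 1 := by rw [SimpleGraph.edist_eq_one_iff_adj.mpr hxy]
    _ ≤ r := Order.add_one_le_of_lt hx

theorem coveredAtBoundary_of_adj_of_not_covered {B₁ : Finset (V × ℕ)} {x y : V}
    (hxy : G.Adj x y) (hy : ¬ Covered G B₁ y) : CoveredAtBoundary G B₁ x := by
  intro p hp hx
  by_contra hboundary
  exact hy ⟨p, hp, mem_gball_of_edist_lt_of_adj (lt_of_le_of_ne hx hboundary) hxy⟩

theorem boundary_of_maximal_covered_subpath_general {B₁ : Finset (V × ℕ)} {s t : V}
    (π : G.Walk s t) {a b : ℕ} (ha : 0 < a) (hab : a ≤ b) (hb : b < π.length)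
    (hcov : ∀ m : ℕ, a ≤ m → m ≤ b → Covered G B₁ (π.getVert m))
    (hmax : ∀ a' b' : ℕ, a' ≤ a → b ≤ b' → b' ≤ π.length →
      (∀ m : ℕ, a' ≤ m → m ≤ b' → Covered G B₁ (π.getVert m)) →
      a' = a ∧ b' = b) :
    CoveredAtBoundary G B₁ (π.getVert a) ∧ CoveredAtBoundary G B₁ (π.getVert b) := by
  constructor
  · obtain ⟨k, rfl⟩ := Nat.exists_eq_add_one.mpr ha
    have hbefore : ¬ Covered G B₁ (π.getVert k) := fun hk =>
      k.succ_ne_self.symm (hmax k b k.le_succ le_rfl hb.le fun m hkm hmb =>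
        hkm.eq_or_lt.elim (fun h => h ▸ hk) fun h => hcov m h hmb).1
    exact coveredAtBoundary_of_adj_of_not_covered
      (π.adj_getVert_succ (by omega)).symm hbefore
  · have hafter : ¬ Covered G B₁ (π.getVert (b + 1)) := fun hb' =>
      b.succ_ne_self (hmax a (b + 1) le_rfl b.le_succ hb fun m ham hmb =>
        hmb.eq_or_lt.elim (fun h => h ▸ hb') fun h => hcov m ham (Nat.le_of_lt_succ h)).2
    exact coveredAtBoundary_of_adj_of_not_covered (π.adj_getVert_succ hb) hafter

end

/-- **Boundary claim.** Let `π` be a shortest path from `s` to `t` and let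
`π[u, v]` be a maximal covered subpath of `π` (given by positions
`a ≤ b ≤ |π|` along `π`, with `u = π.getVert a` and `v = π.getVert b`), with
`u ≠ s` and `v ≠ t`. Then both `u` and `v` are covered at boundary by `B₁`. -/
theorem boundary_of_maximal_covered_subpath
    (V : Type) [Fintype V] (G : SimpleGraph V) (B₁ : Finset (V × ℕ))
    (s t : V) (π : G.Walk s t) (hpath : π.IsPath)
    (hshort : π.length = G.dist s t)
    (a b : ℕ) (hab : a ≤ b) (hb : b ≤ π.length)
    (hcov : ∀ m : ℕ, a ≤ m → m ≤ b → Covered G B₁ (π.getVert m))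
    (hu : π.getVert a ≠ s) (hv : π.getVert b ≠ t)
    (hmax : ∀ a' b' : ℕ, a' ≤ a → b ≤ b' → b' ≤ π.length →
      (∀ m : ℕ, a' ≤ m → m ≤ b' → Covered G B₁ (π.getVert m)) →
      a' = a ∧ b' = b) :
    CoveredAtBoundary G B₁ (π.getVert a) ∧
    CoveredAtBoundary G B₁ (π.getVert b) := by
  exact boundary_of_maximal_covered_subpath_general π
    (Nat.pos_of_ne_zero fun ha => hu (ha ▸ π.getVert_zero)) hab
    (lt_of_not_ge fun hle => hv (π.getVert_of_length_le hle)) hcov hmax
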